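/- Let {X_n, n≥1} satisfy the φ-mixing condition (1) with rate r>2 and constant C>0, and the moment condition (2) with exponent α ∈ (0,1). Let b>0, Z_k = Z_k(b) = X_k·1(|X_k|>b) − E(X_k·1(|X_k|>b)), s = 1+α, M_n = Σ_{k=1}^n E|Z_k|^s, and φ = Σ_{m=1}^∞ φ(m)^{1/2}. Then for every ε > 0, E|Σ_{k=1}^n Z_k|^{1+α} ≤ f(ε)·M_n, where f(ε) = 2 + ε + (1+4φ)·[1−(1+ε)^{-1}]^{-2}·4/(1−α)^2. -/

import Mathlib

open MeasureTheory ProbabilityTheory Finset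

noncomputable def phiCoef {Ω : Type*} [MeasurableSpace Ω] (μ : Measure Ω)
    (X : ℕ → Ω → ℝ) (m : ℕ) : ℝ :=
  sSup {x : ℝ | ∃ k : ℕ, 1 ≤ k ∧ ∃ A B : Set Ω,
    MeasurableSet[⨆ i ∈ Set.Icc 1 k, MeasurableSpace.comap (X i) inferInstance] A ∧
    MeasurableSet[⨆ i ∈ Set.Ici (k + m), MeasurableSpace.comap (X i) inferInstance] B ∧
    0 < μ A ∧
    x = |(μ (B ∩ A)).toReal / (μ A).toReal - (μ B).toReal|}

noncomputable def phiSum {Ω : Type*} [MeasurableSpace Ω] (μ : Measure Ω)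
    (X : ℕ → Ω → ℝ) : ℝ :=
  ∑' m : ℕ, Real.sqrt (phiCoef μ X (m + 1))

noncomputable def tailPart {Ω : Type*} [MeasurableSpace Ω] (μ : Measure Ω)
    (X : ℕ → Ω → ℝ) (b : ℝ) (k : ℕ) (ω : Ω) : ℝ :=
  (if b < |X k ω| then X k ω else 0) - ∫ ω', (if b < |X k ω'| then X k ω' else 0) ∂μ

noncomputable def mainPart {Ω : Type*} [MeasurableSpace Ω] (μ : Measure Ω)
    (X : ℕ → Ω → ℝ) (b : ℝ) (k : ℕ) (ω : Ω) : ℝ :=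
  (if |X k ω| ≤ b then X k ω else 0) - ∫ ω', (if |X k ω'| ≤ b then X k ω' else 0) ∂μ

/-!
Write `M = ∑ E|Z_k|^s` and truncate every `Z_k` at a level `t`. If `|∑ Z_k| ≥ t`, then either some
`|Z_k| ≥ t`, or the sum of the truncations is at least `t` in absolute value. As the `Z_k` are
centred, that sum has mean at most `δ t` once `t^s ≥ δ⁻¹ M`, and mixing bounds its variance by
`1 + 4φ` times the sum of the second moments, so its tail is controlled by Chebyshev's inequality.
Integrating the tail probability against `s t^(s-1)`, the large summands contribute `M`, the levels
below `(δ⁻¹ M)^(1/s)` contribute `δ⁻¹ M`, and the variances contribute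
`(1 + 4φ) (1 - δ)⁻² s / (2 - s) M`, because `t^(s-3) |Z|^2` integrates to `|Z|^s / (2 - s)` over
`t ≥ |Z|`. Now take `δ = (1 + ε)⁻¹` and use `s / (2 - s) ≤ 4 / (1 - α)^2` for `s = 1 + α`.

The covariance of `f` and `g` is the sum of `a b (P(f = a, g = b) - P(f = a) P(g = b))` over the
values of simple functions. Cauchy–Schwarz for the absolute value of this kernel reduces it to the
row sums, which are at most `2 p P(f = a)` by mixing, and to the column sums, which are at most
`2 P(g = b)` trivially; only the forward coefficient `p` is therefore needed.
-/

/-- `PhiDependent μ p f g` says that `|P(g ∈ V | f ∈ U) - P(g ∈ V)| ≤ p` for all events, which is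
what a bound `p` on a `φ`-mixing coefficient means for two random variables. It is multiplied out
by `P(f ∈ U)`, so that events of probability zero need not be excluded. -/
def PhiDependent {Ω β γ : Type*} [MeasurableSpace Ω] [MeasurableSpace β] [MeasurableSpace γ]
    (μ : Measure Ω) (p : ℝ) (f : Ω → β) (g : Ω → γ) : Prop :=
  ∀ (U : Set β) (V : Set γ), MeasurableSet U → MeasurableSet V →
    |μ.real (f ⁻¹' U ∩ g ⁻¹' V) - μ.real (f ⁻¹' U) * μ.real (g ⁻¹' V)| ≤ p * μ.real (f ⁻¹' U)

theorem sum_abs_le_two_mul_of_abs_sum_le {ι : Type*} {T : Finset ι} {d : ι → ℝ} {c : ℝ}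
    (h : ∀ S ⊆ T, |∑ i ∈ S, d i| ≤ c) : ∑ i ∈ T, |d i| ≤ 2 * c := by
  have hpos : ∑ i ∈ T with 0 ≤ d i, |d i| = ∑ i ∈ T with 0 ≤ d i, d i :=
    sum_congr rfl fun i hi => abs_of_nonneg (mem_filter.1 hi).2
  have hneg : ∑ i ∈ T with ¬ 0 ≤ d i, |d i| = -∑ i ∈ T with ¬ 0 ≤ d i, d i := by
    rw [← sum_neg_distrib]
    exact sum_congr rfl fun i hi => abs_of_neg (not_le.1 (mem_filter.1 hi).2)
  rw [← sum_filter_add_sum_filter_not T (fun i => 0 ≤ d i), hpos, hneg, two_mul]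
  exact add_le_add ((le_abs_self _).trans (h _ (filter_subset _ _)))
    ((neg_le_abs _).trans (h _ (filter_subset _ _)))

section Approximation

open Filter Topology

variable {Ω : Type*} [MeasurableSpace Ω] {μ : Measure Ω} {u : ℕ → ℝ → ℝ} {C : ℝ}

theorem exists_simpleFunc_tendsto_id : ∃ u : ℕ → SimpleFunc ℝ ℝ,
    (∀ n x, |u n x| ≤ 2 * |x|) ∧ ∀ x, Tendsto (fun n => u n x) atTop (𝓝 x) := by
  refine ⟨SimpleFunc.approxOn id measurable_id Set.univ 0 (Set.mem_univ _), fun n x => ?_,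
    fun x => SimpleFunc.tendsto_approxOn measurable_id (Set.mem_univ _) (by simp)⟩
  simpa only [two_mul, id_eq, Real.norm_eq_abs] using
    SimpleFunc.norm_approxOn_zero_le measurable_id (Set.mem_univ _) x n

theorem tendsto_integral_comp_of_bound {f : Ω → ℝ} (hf : Integrable f μ)
    (hu : ∀ n, Measurable (u n)) (hbound : ∀ n x, |u n x| ≤ C * |x|)
    (hlim : ∀ x, Tendsto (fun n => u n x) atTop (𝓝 x)) :
    Tendsto (fun n => ∫ ω, u n (f ω) ∂μ) atTop (𝓝 (∫ ω, f ω ∂μ)) :=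
  tendsto_integral_of_dominated_convergence (fun ω => C * |f ω|)
    (fun n => ((hu n).comp_aemeasurable hf.aemeasurable).aestronglyMeasurable)
    (hf.abs.const_mul C) (fun n => ae_of_all _ fun ω => hbound n (f ω))
    (ae_of_all _ fun ω => hlim (f ω))

theorem tendsto_integral_comp_mul_comp_of_bound {f g : Ω → ℝ} (hf : MemLp f 2 μ)
    (hg : MemLp g 2 μ) (hu : ∀ n, Measurable (u n)) (hbound : ∀ n x, |u n x| ≤ C * |x|)
    (hlim : ∀ x, Tendsto (fun n => u n x) atTop (𝓝 x)) :
    Tendsto (fun n => ∫ ω, u n (f ω) * u n (g ω) ∂μ) atTop (𝓝 (∫ ω, f ω * g ω ∂μ)) := by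
  refine tendsto_integral_of_dominated_convergence (fun ω => C * |f ω| * (C * |g ω|))
    (fun n => (((hu n).comp_aemeasurable hf.aemeasurable).mul
      ((hu n).comp_aemeasurable hg.aemeasurable)).aestronglyMeasurable)
    ((hf.abs.const_mul C).integrable_mul (hg.abs.const_mul C))
    (fun n => ae_of_all _ fun ω => ?_) (ae_of_all _ fun ω => (hlim (f ω)).mul (hlim (g ω)))
  rw [norm_mul]
  exact mul_le_mul (hbound n _) (hbound n _) (norm_nonneg _) ((abs_nonneg _).trans (hbound n _))

end Approximation

section PhiDependent

variable {Ω β γ : Type*} [MeasurableSpace Ω] [MeasurableSpace β] [MeasurableSpace γ]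
  {μ : Measure Ω} {p q : ℝ}

theorem PhiDependent.comp {β' γ' : Type*} [MeasurableSpace β'] [MeasurableSpace γ']
    {f : Ω → β} {g : Ω → γ} (h : PhiDependent μ p f g) {u : β → β'} {v : γ → γ'}
    (hu : Measurable u) (hv : Measurable v) : PhiDependent μ p (u ∘ f) (v ∘ g) :=
  fun U V hU hV => h (u ⁻¹' U) (v ⁻¹' V) (hu hU) (hv hV)

theorem PhiDependent.sum_abs_sub_le [IsFiniteMeasure μ] [MeasurableSingletonClass β]
    [MeasurableSingletonClass γ] {f : Ω → β} {g : Ω → γ} (h : PhiDependent μ p f g)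
    (hg : Measurable g) (a : β) (T : Finset γ) :
    ∑ b ∈ T, |μ.real (f ⁻¹' {a} ∩ g ⁻¹' {b}) - μ.real (f ⁻¹' {a}) * μ.real (g ⁻¹' {b})|
      ≤ 2 * (p * μ.real (f ⁻¹' {a})) := by
  refine sum_abs_le_two_mul_of_abs_sum_le fun S _ => ?_
  have hgm : ∀ b ∈ S, MeasurableSet (g ⁻¹' {b}) := fun b _ => hg (measurableSet_singleton b)
  have hjoint : ∑ b ∈ S, μ.real (f ⁻¹' {a} ∩ g ⁻¹' {b}) = μ.real (f ⁻¹' {a} ∩ g ⁻¹' S) := by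
    rw [Set.inter_comm, ← measureReal_restrict_apply (hg S.measurableSet),
      ← sum_measureReal_preimage_singleton S hgm]
    exact sum_congr rfl fun b hb => by rw [measureReal_restrict_apply (hgm b hb), Set.inter_comm]
  rw [sum_sub_distrib, ← mul_sum, hjoint, sum_measureReal_preimage_singleton S hgm]
  exact h _ _ (measurableSet_singleton a) S.measurableSet

theorem memLp_indicator_one [IsFiniteMeasure μ] {A : Set Ω} {r : ENNReal} (hA : MeasurableSet A) :
    MemLp (A.indicator (1 : Ω → ℝ)) r μ :=
  (memLp_const 1).indicator hA

theorem integral_simpleFunc_sq_eq_sum [IsFiniteMeasure μ] (f : SimpleFunc Ω ℝ) :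
    ∫ ω, f ω ^ 2 ∂μ = ∑ a ∈ f.range, a ^ 2 * μ.real (f ⁻¹' {a}) := by
  have h := SimpleFunc.map_integral f (· ^ 2) (μ := μ) (SimpleFunc.integrable_of_isFiniteMeasure f)
    (by simp)
  rw [SimpleFunc.integral_eq_integral _ (SimpleFunc.integrable_of_isFiniteMeasure _)] at h
  simpa only [SimpleFunc.coe_map, Function.comp_apply, smul_eq_mul, mul_comm] using h

variable [IsProbabilityMeasure μ]

theorem PhiDependent.nonneg {f : Ω → β} {g : Ω → γ} (h : PhiDependent μ p f g) : 0 ≤ p := by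
  simpa using (abs_nonneg _).trans (h Set.univ Set.univ MeasurableSet.univ MeasurableSet.univ)

theorem phiDependent_one (f : Ω → β) (g : Ω → γ) : PhiDependent μ 1 f g := by
  intro U V _ _
  rw [one_mul]
  exact abs_sub_le_of_nonneg_of_le measureReal_nonneg (measureReal_mono Set.inter_subset_left)
    (by positivity) (mul_le_of_le_one_right measureReal_nonneg measureReal_le_one)

theorem covariance_indicator_one {A B : Set Ω} (hA : MeasurableSet A) (hB : MeasurableSet B) :
    cov[A.indicator 1, B.indicator 1; μ] = μ.real (A ∩ B) - μ.real A * μ.real B := by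
  rw [covariance_eq_sub (memLp_indicator_one hA) (memLp_indicator_one hB),
    ← Set.inter_indicator_one, integral_indicator_one hA, integral_indicator_one hB,
    integral_indicator_one (hA.inter hB)]

theorem covariance_simpleFunc_eq_sum (f g : SimpleFunc Ω ℝ) :
    cov[f, g; μ] = ∑ a ∈ f.range, ∑ b ∈ g.range,
      a * b * (μ.real (f ⁻¹' {a} ∩ g ⁻¹' {b}) - μ.real (f ⁻¹' {a}) * μ.real (g ⁻¹' {b})) := by
  have hsum : ∀ f : SimpleFunc Ω ℝ,
      (f : Ω → ℝ) = fun ω => ∑ a ∈ f.range, a * (f ⁻¹' {a}).indicator (1 : Ω → ℝ) ω := by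
    intro f
    ext ω
    rw [sum_eq_single_of_mem (f ω) (f.mem_range_self ω)
      fun a _ ha => by simp [Set.indicator, ha.symm]]
    simp
  have hmem : ∀ (f : SimpleFunc Ω ℝ) (a : ℝ), a ∈ f.range →
      MemLp (fun ω => a * (f ⁻¹' {a}).indicator (1 : Ω → ℝ) ω) 2 μ := fun f a _ =>
    (memLp_indicator_one (f.measurableSet_fiber a)).const_mul a
  refine (congrArg₂ (cov[·, ·; μ]) (hsum f) (hsum g)).trans ?_
  rw [covariance_fun_sum_fun_sum' (hmem f) (hmem g)]
  refine sum_congr rfl fun a _ => sum_congr rfl fun b _ => ?_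
  rw [covariance_const_mul_left, covariance_const_mul_right,
    covariance_indicator_one (f.measurableSet_fiber a) (g.measurableSet_fiber b)]
  ring

theorem PhiDependent.covariance_sq_le_of_simpleFunc {f g : SimpleFunc Ω ℝ}
    (hfg : PhiDependent μ p f g) (hgf : PhiDependent μ q g f) :
    cov[f, g; μ] ^ 2 ≤ 4 * p * q * (∫ ω, f ω ^ 2 ∂μ) * ∫ ω, g ω ^ 2 ∂μ := by
  set D : ℝ → ℝ → ℝ := fun a b =>
    μ.real (f ⁻¹' {a} ∩ g ⁻¹' {b}) - μ.real (f ⁻¹' {a}) * μ.real (g ⁻¹' {b}) with hD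
  have hrow : ∑ a ∈ f.range, ∑ b ∈ g.range, a ^ 2 * |D a b| ≤ 2 * p * ∫ ω, f ω ^ 2 ∂μ := by
    rw [integral_simpleFunc_sq_eq_sum, mul_sum]
    refine sum_le_sum fun a _ => ?_
    rw [← mul_sum]
    calc a ^ 2 * ∑ b ∈ g.range, |D a b| ≤ a ^ 2 * (2 * (p * μ.real (f ⁻¹' {a}))) := by
          gcongr
          exact hfg.sum_abs_sub_le g.measurable a _
      _ = _ := by ring
  have hcol : ∑ a ∈ f.range, ∑ b ∈ g.range, b ^ 2 * |D a b| ≤ 2 * q * ∫ ω, g ω ^ 2 ∂μ := by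
    rw [integral_simpleFunc_sq_eq_sum, mul_sum, sum_comm]
    refine sum_le_sum fun b _ => ?_
    rw [← mul_sum]
    calc b ^ 2 * ∑ a ∈ f.range, |D a b| ≤ b ^ 2 * (2 * (q * μ.real (g ⁻¹' {b}))) := by
          gcongr
          simpa only [hD, Set.inter_comm, mul_comm] using hgf.sum_abs_sub_le f.measurable b f.range
      _ = _ := by ring
  have hcauchy : (∑ a ∈ f.range, ∑ b ∈ g.range, a * b * D a b) ^ 2
      ≤ (∑ a ∈ f.range, ∑ b ∈ g.range, a ^ 2 * |D a b|)
        * ∑ a ∈ f.range, ∑ b ∈ g.range, b ^ 2 * |D a b| := by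
    simp only [← sum_product']
    refine sum_sq_le_sum_mul_sum_of_sq_le_mul _ (fun x _ => by positivity)
      (fun x _ => by positivity) fun x _ => le_of_eq ?_
    rw [mul_mul_mul_comm, ← pow_two |D _ _|, sq_abs]
    ring
  rw [covariance_simpleFunc_eq_sum]
  refine hcauchy.trans ((mul_le_mul hrow hcol (by positivity) ?_).trans_eq (by ring))
  exact (by positivity : (0 : ℝ) ≤ _).trans hrow

theorem PhiDependent.covariance_sq_le {f g : Ω → ℝ} (hfg : PhiDependent μ p f g)
    (hgf : PhiDependent μ q g f) (hf : Measurable f) (hg : Measurable g) (hf2 : MemLp f 2 μ)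
    (hg2 : MemLp g 2 μ) :
    cov[f, g; μ] ^ 2 ≤ 4 * p * q * (∫ ω, f ω ^ 2 ∂μ) * ∫ ω, g ω ^ 2 ∂μ := by
  obtain ⟨u, hbound, hlim⟩ := exists_simpleFunc_tendsto_id
  have hu : ∀ n, Measurable (u n) := fun n => (u n).measurable
  have hmem : ∀ {f : Ω → ℝ} (hf : Measurable f) n, MemLp ((u n).comp f hf) 2 μ := fun hf n =>
    ((u n).comp _ hf).memLp_of_isFiniteMeasure 2 μ
  have hmul {f g : Ω → ℝ} (hf : MemLp f 2 μ) (hg : MemLp g 2 μ) :=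
    tendsto_integral_comp_mul_comp_of_bound hf hg hu hbound hlim
  have hmean {f : Ω → ℝ} (hf : MemLp f 2 μ) :=
    tendsto_integral_comp_of_bound (hf.integrable one_le_two) hu hbound hlim
  have happrox : ∀ n, (∫ ω, u n (f ω) * u n (g ω) ∂μ - (∫ ω, u n (f ω) ∂μ) * ∫ ω, u n (g ω) ∂μ) ^ 2
      ≤ 4 * p * q * (∫ ω, u n (f ω) * u n (f ω) ∂μ) * ∫ ω, u n (g ω) * u n (g ω) ∂μ := by
    intro n
    have h := PhiDependent.covariance_sq_le_of_simpleFunc (f := (u n).comp f hf)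
      (g := (u n).comp g hg) (hfg.comp (hu n) (hu n)) (hgf.comp (hu n) (hu n))
    rw [covariance_eq_sub (hmem hf n) (hmem hg n)] at h
    simpa only [pow_two, SimpleFunc.coe_comp, Pi.mul_apply, Function.comp_apply] using h
  simp only [covariance_eq_sub hf2 hg2, pow_two (f _), pow_two (g _)]
  exact le_of_tendsto_of_tendsto' (((hmul hf2 hg2).sub ((hmean hf2).mul (hmean hg2))).pow 2)
    (((hmul hf2 hf2).const_mul _).mul (hmul hg2 hg2)) happrox

theorem PhiDependent.abs_covariance_le {f g : Ω → ℝ} (h : PhiDependent μ p f g)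
    (hf : Measurable f) (hg : Measurable g) (hf2 : MemLp f 2 μ) (hg2 : MemLp g 2 μ) :
    |cov[f, g; μ]| ≤ √p * (∫ ω, f ω ^ 2 ∂μ + ∫ ω, g ω ^ 2 ∂μ) := by
  have hf0 : 0 ≤ ∫ ω, f ω ^ 2 ∂μ := integral_nonneg fun ω => sq_nonneg _
  have hg0 : 0 ≤ ∫ ω, g ω ^ 2 ∂μ := integral_nonneg fun ω => sq_nonneg _
  refine abs_le_of_sq_le_sq ?_ (mul_nonneg (Real.sqrt_nonneg p) (add_nonneg hf0 hg0))
  calc cov[f, g; μ] ^ 2 ≤ p * (4 * (∫ ω, f ω ^ 2 ∂μ) * ∫ ω, g ω ^ 2 ∂μ) := by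
        linarith [h.covariance_sq_le (phiDependent_one g f) hf hg hf2 hg2]
    _ ≤ p * (∫ ω, f ω ^ 2 ∂μ + ∫ ω, g ω ^ 2 ∂μ) ^ 2 := by
        have := h.nonneg
        gcongr
        exact four_mul_le_sq_add _ _
    _ = (√p * (∫ ω, f ω ^ 2 ∂μ + ∫ ω, g ω ^ 2 ∂μ)) ^ 2 := by rw [mul_pow, Real.sq_sqrt h.nonneg]

end PhiDependent

theorem summable_sqrt_of_le_rpow {a : ℕ → ℝ} {r C : ℝ} (hr : 2 < r)
    (ha : ∀ m : ℕ, 1 ≤ m → a m ≤ C * ((m : ℝ) + 1) ^ (-r)) :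
    Summable fun m => √(a (m + 1)) := by
  have hs : Summable fun m : ℕ => √C * ((m + 2 : ℕ) : ℝ) ^ (-(r / 2)) :=
    ((summable_nat_add_iff 2).2 (Real.summable_nat_rpow.2 (by linarith))).mul_left _
  refine hs.of_nonneg_of_le (fun _ => Real.sqrt_nonneg _) fun m => ?_
  have hm : (0 : ℝ) ≤ (m + 2 : ℕ) := Nat.cast_nonneg _
  calc √(a (m + 1)) ≤ √(C * ((m + 2 : ℕ) : ℝ) ^ (-r)) := by
        refine Real.sqrt_le_sqrt ((ha (m + 1) (by omega)).trans_eq ?_)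
        push_cast
        ring_nf
    _ = √C * ((m + 2 : ℕ) : ℝ) ^ (-(r / 2)) := by
        rw [Real.sqrt_mul' _ (Real.rpow_nonneg hm _), Real.sqrt_eq_rpow (_ ^ _),
          ← Real.rpow_mul hm]
        ring_nf

section MixingCoefficient

variable {Ω : Type*} [MeasurableSpace Ω] {μ : Measure Ω} [IsProbabilityMeasure μ] {X : ℕ → Ω → ℝ}

theorem abs_div_sub_le_phiCoef {m k : ℕ} (hk : 1 ≤ k) {A B : Set Ω}
    (hA : MeasurableSet[⨆ i ∈ Set.Icc 1 k, MeasurableSpace.comap (X i) inferInstance] A)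
    (hB : MeasurableSet[⨆ i ∈ Set.Ici (k + m), MeasurableSpace.comap (X i) inferInstance] B)
    (hμA : 0 < μ A) :
    |μ.real (B ∩ A) / μ.real A - μ.real B| ≤ phiCoef μ X m := by
  refine le_csSup ⟨1, ?_⟩ ⟨k, hk, A, B, hA, hB, hμA, rfl⟩
  rintro _ ⟨_, -, A, B, -, -, -, rfl⟩
  exact abs_sub_le_of_nonneg_of_le (div_nonneg measureReal_nonneg measureReal_nonneg)
    (div_le_one_of_le₀ (measureReal_mono Set.inter_subset_right) measureReal_nonneg)
    measureReal_nonneg measureReal_le_one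

theorem phiDependent_phiCoef {i j m : ℕ} (hi : 1 ≤ i) (hij : i + m ≤ j) :
    PhiDependent μ (phiCoef μ X m) (X i) (X j) := by
  intro U V hU hV
  rcases eq_zero_or_pos (μ (X i ⁻¹' U)) with hnull | hpos
  · have hinter : μ (X i ⁻¹' U ∩ X j ⁻¹' V) = 0 := measure_mono_null Set.inter_subset_left hnull
    simp [Measure.real, hnull, hinter]
  have hreal : 0 < μ.real (X i ⁻¹' U) := ENNReal.toReal_pos hpos.ne' (measure_ne_top _ _)
  have hpast : MeasurableSet[⨆ i' ∈ Set.Icc 1 i, MeasurableSpace.comap (X i') inferInstance]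
      (X i ⁻¹' U) :=
    le_iSup₂_of_le (f := fun i' _ => MeasurableSpace.comap (X i') inferInstance)
      i ⟨hi, le_rfl⟩ le_rfl _ ⟨U, hU, rfl⟩
  have hfuture : MeasurableSet[⨆ j' ∈ Set.Ici (i + m), MeasurableSpace.comap (X j') inferInstance]
      (X j ⁻¹' V) :=
    le_iSup₂_of_le (f := fun j' _ => MeasurableSpace.comap (X j') inferInstance)
      j hij le_rfl _ ⟨V, hV, rfl⟩
  calc |μ.real (X i ⁻¹' U ∩ X j ⁻¹' V) - μ.real (X i ⁻¹' U) * μ.real (X j ⁻¹' V)|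
      = |μ.real (X j ⁻¹' V ∩ X i ⁻¹' U) / μ.real (X i ⁻¹' U) - μ.real (X j ⁻¹' V)|
          * μ.real (X i ⁻¹' U) := by
        rw [← abs_of_pos hreal, ← abs_mul, abs_of_pos hreal, sub_mul,
          div_mul_cancel₀ _ hreal.ne', Set.inter_comm, mul_comm (μ.real (X j ⁻¹' V))]
    _ ≤ phiCoef μ X m * μ.real (X i ⁻¹' U) := by
        gcongr
        exact abs_div_sub_le_phiCoef hi hpast hfuture hpos

end MixingCoefficient

section Variance

theorem sum_comp_dist_le {c : ℕ → ℝ} (hc : ∀ m, 0 ≤ c m) (hs : Summable fun m => c (m + 1))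
    {I : Finset ℕ} {i : ℕ} (hI : i ∉ I) :
    ∑ j ∈ I, c (Nat.dist i j) ≤ 2 * ∑' m, c (m + 1) := by
  have hside : ∀ J ⊆ I, Set.InjOn (Nat.dist i) J →
      ∑ j ∈ J, c (Nat.dist i j) ≤ ∑' m, c (m + 1) := by
    intro J hJ hinj
    have hpos : ∀ j ∈ J, Nat.dist i j - 1 + 1 = Nat.dist i j := fun j hj =>
      Nat.sub_add_cancel (Nat.dist_pos_of_ne (ne_of_mem_of_not_mem (hJ hj) hI).symm)
    have hinj' : Set.InjOn (fun j => Nat.dist i j - 1) J := fun j hj k hk hjk =>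
      hinj hj hk ((hpos j hj).symm.trans ((congrArg (· + 1) hjk).trans (hpos k hk)))
    calc ∑ j ∈ J, c (Nat.dist i j) = ∑ j ∈ J, c (Nat.dist i j - 1 + 1) :=
          sum_congr rfl fun j hj => by rw [hpos j hj]
      _ = ∑ m ∈ J.image (fun j => Nat.dist i j - 1), c (m + 1) :=
          (sum_image (f := fun m => c (m + 1)) hinj').symm
      _ ≤ ∑' m, c (m + 1) := hs.sum_le_tsum _ fun m _ => hc _
  rw [← sum_filter_add_sum_filter_not I (· < i), two_mul]
  refine add_le_add (hside _ (filter_subset _ _) fun j hj k hk hjk => ?_)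
    (hside _ (filter_subset _ _) fun j hj k hk hjk => ?_) <;>
  · simp only [coe_filter, Set.mem_ofPred_eq, Nat.dist] at hj hk hjk
    omega

theorem sum_sum_le_of_symm {I : Finset ℕ} {c : ℕ → ℝ} {q : ℕ → ℝ} {a : ℕ → ℕ → ℝ}
    (hc : ∀ m, 0 ≤ c m) (hs : Summable fun m => c (m + 1)) (hq : ∀ i ∈ I, 0 ≤ q i)
    (ha : ∀ i ∈ I, a i i ≤ q i) (hsymm : ∀ i j, a i j = a j i)
    (hlt : ∀ i ∈ I, ∀ j ∈ I, i < j → a i j ≤ c (j - i) * (q i + q j)) :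
    ∑ i ∈ I, ∑ j ∈ I, a i j ≤ (1 + 4 * ∑' m, c (m + 1)) * ∑ i ∈ I, q i := by
  have hoff : ∀ i ∈ I, ∀ j ∈ I.erase i, a i j ≤ c (Nat.dist i j) * (q i + q j) := by
    intro i hi j hj
    obtain ⟨hne, hj⟩ := mem_erase.1 hj
    rcases hne.lt_or_gt with h | h
    · rw [hsymm, add_comm, Nat.dist_eq_sub_of_le_right h.le]
      exact hlt j hj i hi h
    · rw [Nat.dist_eq_sub_of_le h.le]
      exact hlt i hi j hj h
  have hswap : ∑ i ∈ I, ∑ j ∈ I.erase i, c (Nat.dist i j) * q j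
      = ∑ i ∈ I, ∑ j ∈ I.erase i, c (Nat.dist i j) * q i := by
    rw [sum_comm' (t' := I) (s' := fun j => I.erase j)
      fun i j => by simp only [mem_erase, ne_comm]; tauto]
    simp only [Nat.dist_comm]
  calc ∑ i ∈ I, ∑ j ∈ I, a i j
      ≤ ∑ i ∈ I, (q i + ∑ j ∈ I.erase i, c (Nat.dist i j) * (q i + q j)) := by
        refine sum_le_sum fun i hi => ?_
        rw [← add_sum_erase _ _ hi]
        exact add_le_add (ha i hi) (sum_le_sum (hoff i hi))
    _ = ∑ i ∈ I, (1 + 2 * ∑ j ∈ I.erase i, c (Nat.dist i j)) * q i := by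
        simp only [mul_add, sum_add_distrib, hswap, add_mul, one_mul, mul_assoc, sum_mul, ← mul_sum]
        ring
    _ ≤ ∑ i ∈ I, (1 + 4 * ∑' m, c (m + 1)) * q i := by
        refine sum_le_sum fun i hi => mul_le_mul_of_nonneg_right ?_ (hq i hi)
        linarith [sum_comp_dist_le hc hs (notMem_erase i I)]
    _ = (1 + 4 * ∑' m, c (m + 1)) * ∑ i ∈ I, q i := (mul_sum _ _ _).symm

theorem variance_sum_le_of_covariance_le {Ω : Type*} [MeasurableSpace Ω] {μ : Measure Ω}
    [IsProbabilityMeasure μ] {Y : ℕ → Ω → ℝ} {c : ℕ → ℝ} {I : Finset ℕ} (hc : ∀ m, 0 ≤ c m)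
    (hs : Summable fun m => c (m + 1)) (hY : ∀ i ∈ I, MemLp (Y i) 2 μ)
    (hcov : ∀ i ∈ I, ∀ j ∈ I, i < j →
      |cov[Y i, Y j; μ]| ≤ c (j - i) * (∫ ω, Y i ω ^ 2 ∂μ + ∫ ω, Y j ω ^ 2 ∂μ)) :
    Var[fun ω => ∑ i ∈ I, Y i ω; μ] ≤ (1 + 4 * ∑' m, c (m + 1)) * ∑ i ∈ I, ∫ ω, Y i ω ^ 2 ∂μ := by
  rw [variance_fun_sum' hY]
  refine sum_sum_le_of_symm hc hs (fun i _ => integral_nonneg fun ω => sq_nonneg _)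
    (fun i hi => ?_) (fun i j => covariance_comm _ _)
    fun i hi j hj hij => (le_abs_self _).trans (hcov i hi j hj hij)
  rw [covariance_self (hY i hi).aemeasurable]
  exact variance_le_expectation_sq (hY i hi).aestronglyMeasurable

end Variance

section Truncation

variable {Ω : Type*} {Z : Ω → ℝ} {s t : ℝ} {ω : Ω}

theorem truncation_eq_zero_of_lt_abs (h : t < |Z ω|) : truncation Z t ω = 0 :=
  Set.indicator_of_notMem (fun hmem => h.not_ge (abs_le.2 ⟨hmem.1.le, hmem.2⟩)) id

theorem abs_truncation_sub_self_le_rpow (ht : 0 < t) (hs : 1 ≤ s) :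
    |truncation Z t ω - Z ω| ≤ t ^ (1 - s) * |Z ω| ^ s := by
  rcases lt_or_ge |Z ω| t with hlt | hge
  · rw [truncation_eq_self hlt, sub_self, abs_zero]
    positivity
  have hpos : 0 < |Z ω| := ht.trans_le hge
  calc |truncation Z t ω - Z ω| ≤ |Z ω| := by
        simp only [truncation, Function.comp_apply, Set.indicator_apply, id]
        split_ifs <;> simp
    _ = |Z ω| ^ (1 - s) * |Z ω| ^ s := by
        rw [← Real.rpow_add hpos, sub_add_cancel, Real.rpow_one]
    _ ≤ t ^ (1 - s) * |Z ω| ^ s := by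
        gcongr ?_ * _
        exact Real.rpow_le_rpow_of_nonpos ht hge (by linarith)

theorem lintegral_Ioi_ofReal_rpow {a p : ℝ} (ha : 0 < a) (hp : p < -1) :
    ∫⁻ t in Set.Ioi a, ENNReal.ofReal (t ^ p) = ENNReal.ofReal (-a ^ (p + 1) / (p + 1)) := by
  rw [← integral_Ioi_rpow_of_lt hp ha, ofReal_integral_eq_lintegral_ofReal
    (integrableOn_Ioi_rpow_of_lt hp ha)]
  exact (ae_restrict_mem measurableSet_Ioi).mono fun t (ht : a < t) =>
    Real.rpow_nonneg (ha.trans ht).le p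

theorem lintegral_Ioi_rpow_mul_truncation_sq_le (hs : s < 2) :
    ∫⁻ t in Set.Ioi 0, ENNReal.ofReal (t ^ (s - 3) * truncation Z t ω ^ 2)
      ≤ ENNReal.ofReal (|Z ω| ^ s / (2 - s)) := by
  rcases eq_or_ne (Z ω) 0 with hz | hz
  · have hzero : ∀ t, truncation Z t ω = 0 := fun t =>
      abs_nonpos_iff.1 (by simpa [hz] using abs_truncation_le_abs_self Z t ω)
    simp [hzero]
  have hpos : 0 < |Z ω| := abs_pos.2 hz
  calc ∫⁻ t in Set.Ioi 0, ENNReal.ofReal (t ^ (s - 3) * truncation Z t ω ^ 2)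
      ≤ ∫⁻ t in Set.Ioi 0,
          (Set.Ici |Z ω|).indicator (fun t => ENNReal.ofReal (t ^ (s - 3) * |Z ω| ^ 2)) t := by
        refine setLIntegral_mono' measurableSet_Ioi fun t (ht : 0 < t) => ?_
        rcases lt_or_ge t |Z ω| with hlt | hge
        · simp [truncation_eq_zero_of_lt_abs hlt]
        · rw [Set.indicator_of_mem (Set.mem_Ici.2 hge), ← sq_abs]
          exact ENNReal.ofReal_le_ofReal (mul_le_mul_of_nonneg_left
            (pow_le_pow_left₀ (abs_nonneg _) (abs_truncation_le_abs_self Z t ω) 2) (by positivity))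
    _ = ∫⁻ t in Set.Ioi |Z ω|, ENNReal.ofReal (t ^ (s - 3) * |Z ω| ^ 2) := by
        rw [setLIntegral_indicator measurableSet_Ici,
          Set.inter_eq_left.2 (Set.Ici_subset_Ioi.2 hpos), ← restrict_Ioi_eq_restrict_Ici]
    _ = ENNReal.ofReal (-|Z ω| ^ (s - 3 + 1) / (s - 3 + 1) * |Z ω| ^ 2) := by
        simp only [ENNReal.ofReal_mul' (sq_nonneg |Z ω|)]
        rw [lintegral_mul_const' _ _ ENNReal.ofReal_ne_top,
          lintegral_Ioi_ofReal_rpow hpos (by linarith)]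
    _ = ENNReal.ofReal (|Z ω| ^ s / (2 - s)) := by
        have hsplit : |Z ω| ^ s = |Z ω| ^ (s - 3 + 1) * |Z ω| ^ 2 := by
          rw [← Real.rpow_natCast, ← Real.rpow_add hpos]
          ring_nf
        rw [hsplit, show s - 3 + 1 = -(2 - s) by ring, neg_div_neg_eq, div_mul_eq_mul_div]

variable [MeasurableSpace Ω] {μ : Measure Ω}

theorem memLp_ofReal_iff_integrable_abs_rpow (hZ : AEStronglyMeasurable Z μ) (hs : 0 < s) :
    MemLp Z (ENNReal.ofReal s) μ ↔ Integrable (fun ω => |Z ω| ^ s) μ := by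
  rw [← integrable_norm_rpow_iff hZ (ENNReal.ofReal_pos.2 hs).ne' ENNReal.ofReal_ne_top,
    ENNReal.toReal_ofReal hs.le]
  rfl

theorem abs_integral_truncation_le_of_integral_eq_zero (hZ : Integrable Z μ)
    (hmean : ∫ ω, Z ω ∂μ = 0) (hmom : Integrable (fun ω => |Z ω| ^ s) μ) (hs : 1 ≤ s)
    (ht : 0 < t) : |∫ ω, truncation Z t ω ∂μ| ≤ t ^ (1 - s) * ∫ ω, |Z ω| ^ s ∂μ := by
  have htrunc : Integrable (truncation Z t) μ :=
    hZ.mono hZ.aestronglyMeasurable.truncation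
      (ae_of_all _ fun ω => abs_truncation_le_abs_self Z t ω)
  calc |∫ ω, truncation Z t ω ∂μ| = |∫ ω, (truncation Z t ω - Z ω) ∂μ| := by
        rw [integral_sub htrunc hZ, hmean, sub_zero]
    _ ≤ ∫ ω, |truncation Z t ω - Z ω| ∂μ := abs_integral_le_integral_abs
    _ ≤ ∫ ω, t ^ (1 - s) * |Z ω| ^ s ∂μ :=
        integral_mono (htrunc.sub hZ).abs (hmom.const_mul _) fun ω =>
          abs_truncation_sub_self_le_rpow ht hs
    _ = t ^ (1 - s) * ∫ ω, |Z ω| ^ s ∂μ := integral_const_mul _ _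

theorem measurable_uncurry_truncation (hZ : Measurable Z) :
    Measurable fun q : ℝ × Ω => truncation Z q.1 q.2 := by
  have hset : MeasurableSet {q : ℝ × Ω | -q.1 < Z q.2 ∧ Z q.2 ≤ q.1} :=
    (measurableSet_lt measurable_fst.neg (hZ.comp measurable_snd)).inter
      (measurableSet_le (hZ.comp measurable_snd) measurable_fst)
  exact (hZ.comp measurable_snd).indicator hset

theorem measurable_integral_truncation_sq [SFinite μ] (hZ : Measurable Z) :
    Measurable fun t => ∫ ω, truncation Z t ω ^ 2 ∂μ :=
  have hjoint := (measurable_uncurry_truncation hZ).pow_const 2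
  hjoint.stronglyMeasurable.integral_prod_right'.measurable

theorem lintegral_Ioi_rpow_mul_integral_truncation_sq_le [IsFiniteMeasure μ] (hs : s < 2)
    (hZ : Measurable Z) (hmom : Integrable (fun ω => |Z ω| ^ s) μ) :
    ∫⁻ t in Set.Ioi 0, ENNReal.ofReal (t ^ (s - 3) * ∫ ω, truncation Z t ω ^ 2 ∂μ)
      ≤ ENNReal.ofReal ((∫ ω, |Z ω| ^ s ∂μ) / (2 - s)) := by
  have hjoint : Measurable fun q : ℝ × Ω =>
      ENNReal.ofReal (q.1 ^ (s - 3) * truncation Z q.1 q.2 ^ 2) :=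
    ((measurable_fst.pow_const _).mul
      ((measurable_uncurry_truncation hZ).pow_const 2)).ennreal_ofReal
  calc ∫⁻ t in Set.Ioi 0, ENNReal.ofReal (t ^ (s - 3) * ∫ ω, truncation Z t ω ^ 2 ∂μ)
      = ∫⁻ t in Set.Ioi 0, ∫⁻ ω, ENNReal.ofReal (t ^ (s - 3) * truncation Z t ω ^ 2) ∂μ := by
        refine setLIntegral_congr_fun measurableSet_Ioi fun t (ht : 0 < t) => ?_
        rw [← integral_const_mul]
        exact ofReal_integral_eq_lintegral_ofReal
          (hZ.aestronglyMeasurable.memLp_truncation.integrable_sq.const_mul _)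
          (ae_of_all _ fun ω => by positivity)
    _ = ∫⁻ ω, (∫⁻ t in Set.Ioi 0, ENNReal.ofReal (t ^ (s - 3) * truncation Z t ω ^ 2)) ∂μ :=
        lintegral_lintegral_swap hjoint.aemeasurable
    _ ≤ ∫⁻ ω, ENNReal.ofReal (|Z ω| ^ s / (2 - s)) ∂μ :=
        lintegral_mono fun ω => lintegral_Ioi_rpow_mul_truncation_sq_le hs
    _ = ENNReal.ofReal ((∫ ω, |Z ω| ^ s ∂μ) / (2 - s)) := by
        rw [← integral_div, ofReal_integral_eq_lintegral_ofReal (hmom.div_const _)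
          (ae_of_all _ fun ω =>
            div_nonneg (Real.rpow_nonneg (abs_nonneg _) s) (sub_nonneg.2 hs.le))]

end Truncation

section MarcinkiewiczZygmund

variable {Ω ι : Type*} [MeasurableSpace Ω] {μ : Measure Ω} {I : Finset ι} {Z : ι → Ω → ℝ}
  {s t δ K : ℝ}

theorem meas_le_abs_sum_le_add_variance_truncation [IsFiniteMeasure μ] (ht : 0 < t) (hδ : δ < 1)
    (hZ : ∀ k ∈ I, AEStronglyMeasurable (Z k) μ)
    (hmean : |∫ ω, ∑ k ∈ I, truncation (Z k) t ω ∂μ| ≤ δ * t) :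
    μ {ω | t ≤ |∑ k ∈ I, Z k ω|} ≤ ∑ k ∈ I, μ {ω | t ≤ |Z k ω|}
      + ENNReal.ofReal (Var[fun ω => ∑ k ∈ I, truncation (Z k) t ω; μ] / ((1 - δ) * t) ^ 2) := by
  set T : Ω → ℝ := fun ω => ∑ k ∈ I, truncation (Z k) t ω
  have hcover : {ω | t ≤ |∑ k ∈ I, Z k ω|} ⊆
      (⋃ k ∈ I, {ω | t ≤ |Z k ω|}) ∪ {ω | (1 - δ) * t ≤ |T ω - μ[T]|} := by
    intro ω (hω : t ≤ |∑ k ∈ I, Z k ω|)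
    by_cases hlarge : ∃ k ∈ I, t ≤ |Z k ω|
    · exact Or.inl (by simpa using hlarge)
    push Not at hlarge
    have hT : T ω = ∑ k ∈ I, Z k ω := sum_congr rfl fun k hk => truncation_eq_self (hlarge k hk)
    refine Or.inr (?_ : (1 - δ) * t ≤ |T ω - μ[T]|)
    calc (1 - δ) * t ≤ |T ω| - |μ[T]| := by rw [hT]; linarith
      _ ≤ |T ω - μ[T]| := abs_sub_abs_le_abs_sub _ _
  calc μ {ω | t ≤ |∑ k ∈ I, Z k ω|}
      ≤ μ (⋃ k ∈ I, {ω | t ≤ |Z k ω|}) + μ {ω | (1 - δ) * t ≤ |T ω - μ[T]|} :=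
        (measure_mono hcover).trans (measure_union_le _ _)
    _ ≤ ∑ k ∈ I, μ {ω | t ≤ |Z k ω|} + ENNReal.ofReal (Var[T; μ] / ((1 - δ) * t) ^ 2) :=
        add_le_add (measure_biUnion_finset_le _ _)
          (meas_ge_le_variance_div_sq (memLp_finsetSum _ fun k hk => (hZ k hk).memLp_truncation)
            (mul_pos (sub_pos.2 hδ) ht))

theorem lintegral_rpow_le_add_of_meas_le {f : Ω → ℝ} {t₀ : ℝ} {g : ℝ → ENNReal} (hs : 0 < s)
    (hf : AEMeasurable f μ) (hZ : ∀ k ∈ I, AEMeasurable (Z k) μ) (ht₀ : 0 ≤ t₀)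
    (htail : ∀ t, t₀ < t → μ {ω | t ≤ |f ω|} ≤ ∑ k ∈ I, μ {ω | t ≤ |Z k ω|} + g t) :
    ∫⁻ ω, ENNReal.ofReal (|f ω| ^ s) ∂μ
      ≤ ENNReal.ofReal (t₀ ^ s) * μ Set.univ + ∑ k ∈ I, ∫⁻ ω, ENNReal.ofReal (|Z k ω| ^ s) ∂μ
        + ENNReal.ofReal s * ∫⁻ t in Set.Ioi 0, g t * ENNReal.ofReal (t ^ (s - 1)) := by
  set w : ℝ → ENNReal := fun t => ENNReal.ofReal (t ^ (s - 1))
  have hcake : ∀ {h : Ω → ℝ}, (∀ ω, 0 ≤ h ω) → AEMeasurable h μ →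
      ∫⁻ ω, ENNReal.ofReal (h ω ^ s) ∂μ
        = ENNReal.ofReal s * ∫⁻ t in Set.Ioi 0, μ {ω | t ≤ h ω} * w t := fun hnn hmeas =>
    lintegral_rpow_eq_lintegral_meas_le_mul μ (ae_of_all _ hnn) hmeas hs
  have hmeas : ∀ h : Ω → ℝ, Measurable fun t : ℝ => μ {ω | t ≤ h ω} * w t := fun h =>
    have hanti : Antitone fun t : ℝ => μ {ω | t ≤ h ω} := fun _ _ hab =>
      measure_mono fun _ hω => hab.trans hω
    hanti.measurable.mul (measurable_id.pow_const (s - 1)).ennreal_ofReal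
  have hsum : Measurable fun t : ℝ =>
      μ {_ω : Ω | t ≤ t₀} * w t + ∑ k ∈ I, μ {ω | t ≤ |Z k ω|} * w t :=
    (hmeas _).add (Finset.measurable_fun_sum I fun k _ => hmeas _)
  have hpoint : ∀ t, μ {ω | t ≤ |f ω|} * w t
      ≤ μ {_ω : Ω | t ≤ t₀} * w t + ∑ k ∈ I, μ {ω | t ≤ |Z k ω|} * w t + g t * w t := by
    intro t
    rw [← sum_mul, ← add_mul, ← add_mul]
    gcongr
    rcases le_or_gt t t₀ with hle | hlt
    · exact (measure_mono fun _ _ => hle).trans (le_add_right le_self_add)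
    · exact (htail t hlt).trans (add_le_add_left le_add_self _)
  have hconst := hcake (fun _ => ht₀) aemeasurable_const
  rw [lintegral_const] at hconst
  rw [hconst, sum_congr rfl fun k hk => hcake (fun ω => abs_nonneg (Z k ω)) (hZ k hk).abs,
    hcake (fun ω => abs_nonneg _) hf.abs, ← mul_sum, ← mul_add, ← mul_add,
    ← lintegral_finsetSum _ fun k _ => hmeas _, ← lintegral_add_left (hmeas _),
    ← lintegral_add_left hsum]
  gcongr with t
  exact hpoint t

theorem lintegral_Ioi_rpow_mul_sum_integral_truncation_sq_le [IsFiniteMeasure μ] (hs : s < 2)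
    (hZ : ∀ k ∈ I, Measurable (Z k)) (hmom : ∀ k ∈ I, Integrable (fun ω => |Z k ω| ^ s) μ) :
    ∫⁻ t in Set.Ioi 0, ENNReal.ofReal (t ^ (s - 3) * ∑ k ∈ I, ∫ ω, truncation (Z k) t ω ^ 2 ∂μ)
      ≤ ENNReal.ofReal ((∑ k ∈ I, ∫ ω, |Z k ω| ^ s ∂μ) / (2 - s)) := by
  have hmeas : ∀ k ∈ I, Measurable fun t : ℝ =>
      ENNReal.ofReal (t ^ (s - 3) * ∫ ω, truncation (Z k) t ω ^ 2 ∂μ) := fun k hk =>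
    ((measurable_id.pow_const (s - 3)).mul
      (measurable_integral_truncation_sq (hZ k hk))).ennreal_ofReal
  calc ∫⁻ t in Set.Ioi 0, ENNReal.ofReal (t ^ (s - 3) * ∑ k ∈ I, ∫ ω, truncation (Z k) t ω ^ 2 ∂μ)
      = ∫⁻ t in Set.Ioi 0, ∑ k ∈ I,
          ENNReal.ofReal (t ^ (s - 3) * ∫ ω, truncation (Z k) t ω ^ 2 ∂μ) := by
        refine setLIntegral_congr_fun measurableSet_Ioi fun t (ht : 0 < t) => ?_
        rw [mul_sum]
        exact ENNReal.ofReal_sum_of_nonneg fun k _ =>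
          mul_nonneg (Real.rpow_nonneg ht.le _) (integral_nonneg fun ω => sq_nonneg _)
    _ = ∑ k ∈ I, ∫⁻ t in Set.Ioi 0,
          ENNReal.ofReal (t ^ (s - 3) * ∫ ω, truncation (Z k) t ω ^ 2 ∂μ) :=
        lintegral_finsetSum' _ fun k hk => (hmeas k hk).aemeasurable
    _ ≤ ∑ k ∈ I, ENNReal.ofReal ((∫ ω, |Z k ω| ^ s ∂μ) / (2 - s)) :=
        sum_le_sum fun k hk =>
          lintegral_Ioi_rpow_mul_integral_truncation_sq_le hs (hZ k hk) (hmom k hk)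
    _ = ENNReal.ofReal ((∑ k ∈ I, ∫ ω, |Z k ω| ^ s ∂μ) / (2 - s)) := by
        rw [sum_div, ENNReal.ofReal_sum_of_nonneg fun k _ => div_nonneg
          (integral_nonneg fun ω => Real.rpow_nonneg (abs_nonneg _) s) (sub_nonneg.2 hs.le)]

theorem lintegral_Ioi_variance_sum_truncation_le [IsFiniteMeasure μ] {c : ℝ} (hs : s < 2)
    (hK : 0 ≤ K) (hZ : ∀ k ∈ I, Measurable (Z k))
    (hmom : ∀ k ∈ I, Integrable (fun ω => |Z k ω| ^ s) μ)
    (hvar : ∀ t, 0 < t → Var[fun ω => ∑ k ∈ I, truncation (Z k) t ω; μ]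
      ≤ K * ∑ k ∈ I, ∫ ω, truncation (Z k) t ω ^ 2 ∂μ) :
    ∫⁻ t in Set.Ioi 0,
        ENNReal.ofReal (Var[fun ω => ∑ k ∈ I, truncation (Z k) t ω; μ] / (c * t) ^ 2)
          * ENNReal.ofReal (t ^ (s - 1))
      ≤ ENNReal.ofReal (K * c⁻¹ ^ 2 * ((∑ k ∈ I, ∫ ω, |Z k ω| ^ s ∂μ) / (2 - s))) := by
  have hL : 0 ≤ K * c⁻¹ ^ 2 := by positivity
  rw [ENNReal.ofReal_mul hL]
  refine le_trans ?_ (mul_le_mul_right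
    (lintegral_Ioi_rpow_mul_sum_integral_truncation_sq_le hs hZ hmom) _)
  rw [← lintegral_const_mul' _ _ ENNReal.ofReal_ne_top]
  refine setLIntegral_mono' measurableSet_Ioi fun t (ht : 0 < t) => ?_
  rw [← ENNReal.ofReal_mul hL, ← ENNReal.ofReal_mul' (by positivity)]
  refine ENNReal.ofReal_le_ofReal ?_
  calc Var[fun ω => ∑ k ∈ I, truncation (Z k) t ω; μ] / (c * t) ^ 2 * t ^ (s - 1)
      ≤ K * (∑ k ∈ I, ∫ ω, truncation (Z k) t ω ^ 2 ∂μ) / (c * t) ^ 2 * t ^ (s - 1) := by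
        gcongr
        exact hvar t ht
    _ = K * c⁻¹ ^ 2 * (t ^ (s - 3) * ∑ k ∈ I, ∫ ω, truncation (Z k) t ω ^ 2 ∂μ) := by
        rw [show s - 3 = s - 1 - (2 : ℕ) by push_cast; ring, Real.rpow_sub_natCast ht.ne', mul_pow]
        ring

theorem abs_integral_sum_truncation_le_mul [IsFiniteMeasure μ] (hs : 1 ≤ s) (ht : 0 < t)
    (hZ : ∀ k ∈ I, Integrable (Z k) μ) (hmean : ∀ k ∈ I, ∫ ω, Z k ω ∂μ = 0)
    (hmom : ∀ k ∈ I, Integrable (fun ω => |Z k ω| ^ s) μ)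
    (hM : ∑ k ∈ I, ∫ ω, |Z k ω| ^ s ∂μ ≤ δ * t ^ s) :
    |∫ ω, ∑ k ∈ I, truncation (Z k) t ω ∂μ| ≤ δ * t := by
  rw [integral_finsetSum _ fun k hk => (hZ k hk).aestronglyMeasurable.integrable_truncation]
  calc |∑ k ∈ I, ∫ ω, truncation (Z k) t ω ∂μ|
      ≤ ∑ k ∈ I, t ^ (1 - s) * ∫ ω, |Z k ω| ^ s ∂μ :=
        (abs_sum_le_sum_abs _ _).trans (sum_le_sum fun k hk =>
          abs_integral_truncation_le_of_integral_eq_zero (hZ k hk) (hmean k hk) (hmom k hk) hs ht)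
    _ ≤ t ^ (1 - s) * (δ * t ^ s) := by
        rw [← mul_sum]
        gcongr
    _ = δ * t := by rw [mul_left_comm, ← Real.rpow_add ht, sub_add_cancel, Real.rpow_one]

theorem lintegral_abs_sum_rpow_le_of_variance_truncation_le [IsProbabilityMeasure μ] (hs1 : 1 ≤ s)
    (hs2 : s < 2) (hδ0 : 0 < δ) (hδ1 : δ < 1) (hK : 0 ≤ K) (hZ : ∀ k ∈ I, Measurable (Z k))
    (hmem : ∀ k ∈ I, MemLp (Z k) (ENNReal.ofReal s) μ) (hmean : ∀ k ∈ I, ∫ ω, Z k ω ∂μ = 0)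
    (hvar : ∀ t, 0 < t → Var[fun ω => ∑ k ∈ I, truncation (Z k) t ω; μ]
      ≤ K * ∑ k ∈ I, ∫ ω, truncation (Z k) t ω ^ 2 ∂μ) :
    ∫⁻ ω, ENNReal.ofReal (|∑ k ∈ I, Z k ω| ^ s) ∂μ ≤ ENNReal.ofReal
      ((1 + δ⁻¹ + K * (1 - δ)⁻¹ ^ 2 * (s / (2 - s))) * ∑ k ∈ I, ∫ ω, |Z k ω| ^ s ∂μ) := by
  have hs0 : 0 < s := by linarith
  have : 0 < 2 - s := sub_pos.2 hs2
  have hmom : ∀ k ∈ I, Integrable (fun ω => |Z k ω| ^ s) μ := fun k hk =>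
    (memLp_ofReal_iff_integrable_abs_rpow (hmem k hk).aestronglyMeasurable hs0).1 (hmem k hk)
  have hint : ∀ k ∈ I, Integrable (Z k) μ := fun k hk =>
    (hmem k hk).integrable (ENNReal.one_le_ofReal.2 hs1)
  have hm0 : ∀ k ∈ I, 0 ≤ ∫ ω, |Z k ω| ^ s ∂μ := fun k _ =>
    integral_nonneg fun ω => Real.rpow_nonneg (abs_nonneg _) s
  set M := ∑ k ∈ I, ∫ ω, |Z k ω| ^ s ∂μ
  have hM0 : 0 ≤ M := sum_nonneg hm0
  have hlevel : 0 ≤ δ⁻¹ * M := by positivity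
  -- The truncated sum has mean at most `δ * t` from the level `t₀` on; below `t₀` the tail
  -- probability is bounded by `1`, which costs `t₀ ^ s = δ⁻¹ * M`.
  set t₀ := (δ⁻¹ * M) ^ s⁻¹
  have ht₀ : 0 ≤ t₀ := Real.rpow_nonneg hlevel _
  have ht₀s : t₀ ^ s = δ⁻¹ * M := Real.rpow_inv_rpow hlevel hs0.ne'
  have hM : ∀ t, t₀ < t → M ≤ δ * t ^ s := fun t ht =>
    (inv_mul_le_iff₀ hδ0).1 (ht₀s ▸ Real.rpow_le_rpow ht₀ ht.le hs0.le)
  have hlayer := lintegral_rpow_le_add_of_meas_le hs0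
    (Finset.measurable_fun_sum I hZ).aemeasurable (fun k hk => (hZ k hk).aemeasurable) ht₀
    fun t ht => meas_le_abs_sum_le_add_variance_truncation (ht₀.trans_lt ht) hδ1
      (fun k hk => (hZ k hk).aestronglyMeasurable)
      (abs_integral_sum_truncation_le_mul hs1 (ht₀.trans_lt ht) hint hmean hmom (hM t ht))
  have hmoments : ∑ k ∈ I, ∫⁻ ω, ENNReal.ofReal (|Z k ω| ^ s) ∂μ = ENNReal.ofReal M := by
    rw [ENNReal.ofReal_sum_of_nonneg hm0]
    exact sum_congr rfl fun k hk => (ofReal_integral_eq_lintegral_ofReal (hmom k hk)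
      (ae_of_all _ fun ω => Real.rpow_nonneg (abs_nonneg _) s)).symm
  rw [measure_univ, mul_one, hmoments, ht₀s] at hlayer
  refine hlayer.trans ((add_le_add_right (mul_le_mul_right
    (lintegral_Ioi_variance_sum_truncation_le hs2 hK hZ hmom hvar) _) _).trans_eq ?_)
  rw [← ENNReal.ofReal_mul hs0.le, ← ENNReal.ofReal_add hlevel hM0,
    ← ENNReal.ofReal_add (by positivity) (by positivity)]
  congr 1
  ring

theorem integral_abs_sum_rpow_le_of_variance_truncation_le [IsProbabilityMeasure μ] (hs1 : 1 ≤ s)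
    (hs2 : s < 2) (hδ0 : 0 < δ) (hδ1 : δ < 1) (hK : 0 ≤ K) (hZ : ∀ k ∈ I, Measurable (Z k))
    (hmem : ∀ k ∈ I, MemLp (Z k) (ENNReal.ofReal s) μ) (hmean : ∀ k ∈ I, ∫ ω, Z k ω ∂μ = 0)
    (hvar : ∀ t, 0 < t → Var[fun ω => ∑ k ∈ I, truncation (Z k) t ω; μ]
      ≤ K * ∑ k ∈ I, ∫ ω, truncation (Z k) t ω ^ 2 ∂μ) :
    ∫ ω, |∑ k ∈ I, Z k ω| ^ s ∂μ
      ≤ (1 + δ⁻¹ + K * (1 - δ)⁻¹ ^ 2 * (s / (2 - s))) * ∑ k ∈ I, ∫ ω, |Z k ω| ^ s ∂μ := by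
  have : 0 < 2 - s := sub_pos.2 hs2
  rw [integral_eq_lintegral_of_nonneg_ae (ae_of_all _ fun ω => by positivity)
    ((Finset.measurable_fun_sum I hZ).abs.pow_const s).aestronglyMeasurable]
  exact ENNReal.toReal_le_of_le_ofReal
    (mul_nonneg (by positivity) (sum_nonneg fun k _ => integral_nonneg fun ω => by positivity))
    (lintegral_abs_sum_rpow_le_of_variance_truncation_le hs1 hs2 hδ0 hδ1 hK hZ hmem hmean hvar)

end MarcinkiewiczZygmund

section TailMoment

variable {Ω : Type*} [MeasurableSpace Ω] {μ : Measure Ω} [IsProbabilityMeasure μ]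
  {I : Finset ℕ} {s t δ : ℝ}

theorem variance_sum_truncation_le_of_phiDependent {Z : ℕ → Ω → ℝ} {p : ℕ → ℝ}
    (hp : Summable fun m => √(p (m + 1))) (hZ : ∀ k ∈ I, Measurable (Z k))
    (hdep : ∀ i ∈ I, ∀ j ∈ I, i < j → PhiDependent μ (p (j - i)) (Z i) (Z j)) :
    Var[fun ω => ∑ k ∈ I, truncation (Z k) t ω; μ]
      ≤ (1 + 4 * ∑' m, √(p (m + 1))) * ∑ k ∈ I, ∫ ω, truncation (Z k) t ω ^ 2 ∂μ := by
  have hcut : Measurable (Set.indicator (Set.Ioc (-t) t) (id : ℝ → ℝ)) :=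
    measurable_id.indicator measurableSet_Ioc
  have hmem : ∀ k ∈ I, MemLp (truncation (Z k) t) 2 μ := fun k hk =>
    (hZ k hk).aestronglyMeasurable.memLp_truncation
  exact variance_sum_le_of_covariance_le (c := fun m => √(p m)) (fun m => Real.sqrt_nonneg _) hp
    hmem fun i hi j hj hij => ((hdep i hi j hj hij).comp hcut hcut).abs_covariance_le
      (hcut.comp (hZ i hi)) (hcut.comp (hZ j hj)) (hmem i hi) (hmem j hj)

theorem integral_abs_sum_rpow_le_of_phiDependent {Z : ℕ → Ω → ℝ} {p : ℕ → ℝ} (hs1 : 1 ≤ s)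
    (hs2 : s < 2) (hδ0 : 0 < δ) (hδ1 : δ < 1) (hp : Summable fun m => √(p (m + 1)))
    (hZ : ∀ k ∈ I, Measurable (Z k)) (hmem : ∀ k ∈ I, MemLp (Z k) (ENNReal.ofReal s) μ)
    (hmean : ∀ k ∈ I, ∫ ω, Z k ω ∂μ = 0)
    (hdep : ∀ i ∈ I, ∀ j ∈ I, i < j → PhiDependent μ (p (j - i)) (Z i) (Z j)) :
    ∫ ω, |∑ k ∈ I, Z k ω| ^ s ∂μ
      ≤ (1 + δ⁻¹ + (1 + 4 * ∑' m, √(p (m + 1))) * (1 - δ)⁻¹ ^ 2 * (s / (2 - s)))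
        * ∑ k ∈ I, ∫ ω, |Z k ω| ^ s ∂μ :=
  have : 0 ≤ ∑' m, √(p (m + 1)) := tsum_nonneg fun m => Real.sqrt_nonneg _
  integral_abs_sum_rpow_le_of_variance_truncation_le hs1 hs2 hδ0 hδ1 (by positivity) hZ hmem hmean
    fun _ _ => variance_sum_truncation_le_of_phiDependent hp hZ hdep

end TailMoment

section TailPart

variable {Ω : Type*} [MeasurableSpace Ω] {μ : Measure Ω} {X : ℕ → Ω → ℝ} {b : ℝ} {k : ℕ}

theorem measurable_ite_lt_abs (b : ℝ) : Measurable fun x : ℝ => if b < |x| then x else 0 :=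
  Measurable.ite (measurableSet_lt measurable_const measurable_id.abs) measurable_id
    measurable_const

theorem exists_measurable_tailPart_eq_comp (μ : Measure Ω) (X : ℕ → Ω → ℝ) (b : ℝ) (k : ℕ) :
    ∃ u : ℝ → ℝ, Measurable u ∧ tailPart μ X b k = u ∘ X k :=
  ⟨_, (measurable_ite_lt_abs b).sub_const _, rfl⟩

theorem measurable_tailPart (hX : Measurable (X k)) : Measurable (tailPart μ X b k) :=
  ((measurable_ite_lt_abs b).comp hX).sub_const _

theorem memLp_ite_lt_abs {p : ENNReal} {f : Ω → ℝ} (hf : MemLp f p μ) :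
    MemLp (fun ω => if b < |f ω| then f ω else 0) p μ := by
  refine hf.mono ((measurable_ite_lt_abs b).comp_aemeasurable
    hf.aestronglyMeasurable.aemeasurable).aestronglyMeasurable (ae_of_all _ fun ω => ?_)
  split_ifs <;> simp

theorem memLp_tailPart [IsFiniteMeasure μ] {p : ENNReal} (hX : MemLp (X k) p μ) :
    MemLp (tailPart μ X b k) p μ :=
  (memLp_ite_lt_abs hX).sub (memLp_const _)

theorem integral_tailPart [IsProbabilityMeasure μ] (hX : Integrable (X k) μ) :
    ∫ ω, tailPart μ X b k ω ∂μ = 0 := by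
  have htail : Integrable (fun ω => if b < |X k ω| then X k ω else 0) μ :=
    memLp_one_iff_integrable.1 (memLp_ite_lt_abs (memLp_one_iff_integrable.2 hX))
  simp only [tailPart, integral_sub htail (integrable_const _), integral_const, probReal_univ,
    one_smul, sub_self]

theorem phiDependent_tailPart [IsProbabilityMeasure μ] {i j m : ℕ} (hi : 1 ≤ i)
    (hij : i + m ≤ j) :
    PhiDependent μ (phiCoef μ X m) (tailPart μ X b i) (tailPart μ X b j) := by
  obtain ⟨u, hu, hu_eq⟩ := exists_measurable_tailPart_eq_comp μ X b i
  obtain ⟨v, hv, hv_eq⟩ := exists_measurable_tailPart_eq_comp μ X b j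
  rw [hu_eq, hv_eq]
  exact (phiDependent_phiCoef hi hij).comp hu hv

end TailPart

theorem tail_moment_bound_f_eps_general {Ω : Type*} [MeasurableSpace Ω] (μ : Measure Ω)
    [IsProbabilityMeasure μ] (X : ℕ → Ω → ℝ) (I : Finset ℕ) (hI : ∀ k ∈ I, 1 ≤ k)
    (hmeas : ∀ k ∈ I, Measurable (X k)) (hmix : Summable fun m => √(phiCoef μ X (m + 1)))
    (α : ℝ) (hα0 : 0 ≤ α) (hα1 : α < 1)
    (hint : ∀ k ∈ I, Integrable (fun ω => |X k ω| ^ (1 + α)) μ) (b ε : ℝ) (hε : 0 < ε) :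
    ∫ ω, |∑ k ∈ I, tailPart μ X b k ω| ^ (1 + α) ∂μ ≤
      (2 + ε + (1 + 4 * phiSum μ X) * (1 - (1 + ε)⁻¹)⁻¹ ^ 2 * (4 / (1 - α) ^ 2))
        * ∑ k ∈ I, ∫ ω, |tailPart μ X b k ω| ^ (1 + α) ∂μ := by
  have hX : ∀ k ∈ I, MemLp (X k) (ENNReal.ofReal (1 + α)) μ := fun k hk =>
    (memLp_ofReal_iff_integrable_abs_rpow (hmeas k hk).aestronglyMeasurable (by linarith)).2
      (hint k hk)
  have hbound := integral_abs_sum_rpow_le_of_phiDependent (μ := μ) (Z := tailPart μ X b)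
    (s := 1 + α) (δ := (1 + ε)⁻¹) (by linarith) (by linarith) (by positivity)
    (inv_lt_one_of_one_lt₀ (by linarith)) hmix (fun k hk => measurable_tailPart (hmeas k hk))
    (fun k hk => memLp_tailPart (hX k hk))
    (fun k hk => integral_tailPart ((hX k hk).integrable (ENNReal.one_le_ofReal.2 (by linarith))))
    fun i hi j _ hij => phiDependent_tailPart (hI i hi) (Nat.add_sub_of_le hij.le).le
  have hα : 0 < 1 - α := by linarith
  have hconst : (1 + α) / (2 - (1 + α)) ≤ 4 / (1 - α) ^ 2 := by
    rw [show 2 - (1 + α) = 1 - α by ring, div_le_div_iff₀ hα (by positivity)]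
    nlinarith
  have : 0 ≤ phiSum μ X := tsum_nonneg fun m => Real.sqrt_nonneg _
  refine hbound.trans (mul_le_mul_of_nonneg_right ?_
    (sum_nonneg fun k _ => integral_nonneg fun ω => Real.rpow_nonneg (abs_nonneg _) _))
  rw [inv_inv, ← add_assoc, one_add_one_eq_two]
  exact add_le_add_right (mul_le_mul_of_nonneg_left hconst (by positivity)) _

/-- inequality (7) in the proof of Lemma 1: for every `ε > 0`,
`E|∑_{k=1}^n Z_k|^{1+α} ≤ f(ε) · M_n` with
`f(ε) = 2 + ε + (1+4φ)·(1−(1+ε)⁻¹)⁻²·4/(1−α)²`, where `φ = ∑_{m≥1} φ(m)^{1/2}`. -/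
theorem tail_moment_bound_f_eps
    {Ω : Type*} [MeasurableSpace Ω] (μ : Measure Ω) [IsProbabilityMeasure μ]
    (X : ℕ → Ω → ℝ) (hmeas : ∀ n, Measurable (X n))
    (r C : ℝ) (hr : 2 < r) (hC : 0 < C)
    (hmix : ∀ m : ℕ, 1 ≤ m → phiCoef μ X m ≤ C * ((m : ℝ) + 1) ^ (-r))
    (α : ℝ) (hα0 : 0 < α) (hα1 : α < 1)
    (hint : ∀ n : ℕ, 1 ≤ n → Integrable (fun ω => |X n ω| ^ (1 + α)) μ)
    (hνpos : 0 < ⨆ n : ℕ, ∫ ω, |X (n + 1) ω| ^ (1 + α) ∂μ)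
    (hbdd : BddAbove (Set.range fun n : ℕ => ∫ ω, |X (n + 1) ω| ^ (1 + α) ∂μ))
    (b : ℝ) (hb : 0 < b) (n : ℕ) (hn : 1 ≤ n)
    (s Mn φ : ℝ) (hs : s = 1 + α) (hφ : φ = phiSum μ X)
    (hMn : Mn = ∑ k ∈ Finset.Icc 1 n, ∫ ω, |tailPart μ X b k ω| ^ s ∂μ) :
    ∀ ε : ℝ, 0 < ε →
      ∫ ω, |∑ k ∈ Finset.Icc 1 n, tailPart μ X b k ω| ^ (1 + α) ∂μ ≤
        (2 + ε + (1 + 4 * φ) * (1 - (1 + ε)⁻¹)⁻¹ ^ (2:ℕ) * (4 / (1 - α) ^ (2:ℕ))) * Mn := by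
  subst hs hφ hMn
  exact fun ε hε => tail_moment_bound_f_eps_general μ X (Icc 1 n)
    (fun k hk => (mem_Icc.1 hk).1) (fun k _ => hmeas k) (summable_sqrt_of_le_rpow hr hmix)
    α hα0.le hα1 (fun k hk => hint k (mem_Icc.1 hk).1) b ε hε
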